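/- Let H^m(z) = z^{m−1}/(m−1)! 1_{z≥0} for m ≥ 1 and define the GUE-minor kernel K^{minor}(n, x; n', x') = −1_{n>n'} 2^{n−n'} H^{n−n'}(x−x') + (2/(2πi)²) ∮_{Γ_0} dz ∫_L dw/(w−z) · e^{−z²+2zx} e^{w²−2wx'} w^{n'} z^{−n}, where Γ_0 is a small circle around 0 and L is a vertical line to the right of Γ_0. Then the tacnode GUE-minor kernel K^tac_{β,ρ}(u1,y1;u2,y2), defined as K^{minor}(u1, β−y1; u2, β−y2) plus 2⟨(1 − K^β)^{-1}_{≥−ρ} A^{β,y1−β}_{u1}, B^{β,y2−β}_{u2}⟩_{≥−ρ} with A, B, K^β given by explicit double contour integrals, is invariant under the involution (u1, y1, u2, y2) ↦ (ρ−u2, −y2, ρ−u1, −y1). -/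

import Mathlib

open Complex

/-- `H^m(z) = z^{m−1}/(m−1)! · 1_{z≥0}` (for `m ≥ 1`). -/
noncomputable def Hm (m : ℤ) (z : ℝ) : ℝ :=
  if 0 ≤ z then z ^ (m - 1).toNat / (Nat.factorial (m - 1).toNat : ℝ) else 0

/-- Integral over the upward vertical line `L = c + iℝ`. -/
noncomputable def lineInt (c : ℝ) (f : ℂ → ℂ) : ℂ :=
  ∫ s : ℝ, f ((c : ℂ) + (s : ℝ) * I) * I

/-- The GUE-minor kernel `K^minor(n,x;n',x')`, with `Γ₀` the circle of radius `r0` around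
`0` and `L` the vertical line `Re = c` to its right. -/
noncomputable def Kminor (r0 c : ℝ) (n n' : ℤ) (x x' : ℝ) : ℂ :=
  -(if n' < n then (1 : ℂ) else 0) * 2 ^ (n - n') * ((Hm (n - n') (x - x') : ℝ) : ℂ)
  + 2 / (2 * Real.pi * I) ^ 2 *
      ∮ z in C(0, r0), lineInt c (fun w =>
        (w - z)⁻¹ * (Complex.exp (-z ^ 2 + 2 * z * (x : ℂ))
          / Complex.exp (-w ^ 2 + 2 * w * (x' : ℂ))) * w ^ n' / z ^ n)

/-- The kernel `K^β(λ,κ)`. -/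
noncomputable def Kbeta (r0 c β : ℝ) (lam κ : ℤ) : ℂ :=
  ((2 * Real.pi * I) ^ 2)⁻¹ *
    ∮ ζ in C(0, r0), lineInt c (fun ω =>
      (ω - ζ)⁻¹ * (Complex.exp (-2 * ζ ^ 2 + 4 * (β : ℂ) * ζ)
        / Complex.exp (-2 * ω ^ 2 + 4 * (β : ℂ) * ω)) * ζ ^ κ / ω ^ (lam + 1))

/-- The function `𝒜^{β,y}_v(κ)`. -/
noncomputable def calA (r0 c β y : ℝ) (v κ : ℤ) : ℂ :=
  ((2 * Real.pi * I) ^ 2)⁻¹ *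
    (∮ ζ in C(0, r0), lineInt c (fun ω =>
      (ζ - ω)⁻¹ * (Complex.exp (-ζ ^ 2 - 2 * (y : ℂ) * ζ)
        / Complex.exp (-2 * ω ^ 2 + 4 * (β : ℂ) * ω)) * ζ ^ (-v) / ω ^ (κ + 1)))
  + (2 * Real.pi * I)⁻¹ *
      lineInt c (fun ζ =>
        Complex.exp (ζ ^ 2 - 2 * ζ * ((y : ℂ) + 2 * (β : ℂ))) / ζ ^ (v + κ + 1))

/-- The function `ℬ^{β,y}_u(λ)`. -/
noncomputable def calB (r0 c β y : ℝ) (u lam : ℤ) : ℂ :=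
  ((2 * Real.pi * I) ^ 2)⁻¹ *
    (∮ ζ in C(0, r0), lineInt c (fun ω =>
      (ζ - ω)⁻¹ * (Complex.exp (-2 * ζ ^ 2 + 4 * ζ * (β : ℂ))
        / Complex.exp (-ω ^ 2 - 2 * ω * (y : ℂ))) * ζ ^ lam * ω ^ u))
  + (2 * Real.pi * I)⁻¹ *
      ∮ ω in C(0, r0),
        ω ^ (u + lam) / Complex.exp (ω ^ 2 - 2 * ω * ((y : ℂ) + 2 * (β : ℂ)))

/-- The tacnode GUE-minor kernel `K^tac_{β,ρ}`, where `R` is the resolvent kernel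
`(1 − K^β)⁻¹` on `ℓ²({−ρ, −ρ+1, …})` and the perturbation term is the inner product
`2⟨(1−K^β)⁻¹_{≥−ρ} 𝒜^{β,y₁−β}_{u₁}, ℬ^{β,y₂−β}_{u₂}⟩_{≥−ρ}`. -/
noncomputable def Ktac (r0 c β : ℝ) (ρ : ℤ) (R : ℤ → ℤ → ℂ)
    (u1 : ℤ) (y1 : ℝ) (u2 : ℤ) (y2 : ℝ) : ℂ :=
  Kminor r0 c u1 u2 (β - y1) (β - y2)
  + 2 * ∑' (lam : {j : ℤ // -ρ ≤ j}) (κ : {j : ℤ // -ρ ≤ j}),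
      R (lam : ℤ) (κ : ℤ) * calA r0 c β (y1 - β) u1 (κ : ℤ) * calB r0 c β (y2 - β) u2 (lam : ℤ)

/-!
The weights are entire, so the moments of nonnegative powers on `Γ₀` vanish. The geometric
expansion of the Cauchy kernel `1 / (w - z)` therefore turns every double contour integral into a
finite sum of products of moments. In this form `K^β`, with the common index range cut off at a
large `N`, is a product `ΨΦ` of two symmetric matrices, the double integral in `K^minor` is a dot
product `a · b`, and `𝒜 = b' - Ψa`, `ℬ = a' - Φb`, where `a'`, `b'` are the vectors that take the
place of `a`, `b` after the involution. With `R = (1 - ΨΦ)⁻¹`, the expression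
`a · b + (a' - Φb) · R(b' - Ψa)` is invariant under exchanging `(a, b)` and `(a', b')`, because
`ΦR` and `RΨ` are symmetric and `ΦRΨ = Rᵀ - 1`.
-/

open MeasureTheory Metric
open scoped Real Matrix

section ContourIntegrals

variable {c r : ℝ}

lemma le_norm_add_ofReal_mul_I (c s : ℝ) : c ≤ ‖(c : ℂ) + s * I‖ := by
  simpa using Complex.re_le_norm ((c : ℂ) + s * I)

lemma add_ofReal_mul_I_ne_zero (hc : 0 < c) (s : ℝ) : (c : ℂ) + s * I ≠ 0 :=
  norm_pos_iff.1 (hc.trans_le (le_norm_add_ofReal_mul_I c s))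

lemma norm_add_ofReal_mul_I_pow_le (c s : ℝ) (n : ℕ) :
    ‖(c : ℂ) + s * I‖ ^ n ≤ n.factorial * Real.exp |c| * (Real.exp s + Real.exp (-s)) := by
  have h_norm : ‖(c : ℂ) + s * I‖ ≤ |c| + |s| := by
    simpa using norm_add_le (c : ℂ) (s * I)
  have h_pow := Real.pow_div_factorial_le_exp _ (norm_nonneg ((c : ℂ) + s * I)) n
  rw [div_le_iff₀' (by positivity)] at h_pow
  calc ‖(c : ℂ) + s * I‖ ^ n ≤ n.factorial * Real.exp (|c| + |s|) := by
        grw [h_pow, h_norm]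
    _ = n.factorial * Real.exp |c| * Real.exp |s| := by rw [Real.exp_add, mul_assoc]
    _ ≤ n.factorial * Real.exp |c| * (Real.exp s + Real.exp (-s)) := by
        gcongr
        exact Real.exp_abs_le s

lemma verticalIntegrable_mul_zpow_neg {f : ℂ → ℂ} (hc : 0 < c) (hf : VerticalIntegrable f c)
    (n : ℕ) : VerticalIntegrable (fun w ↦ f w * w ^ (-n : ℤ)) c := by
  have h_cont : Continuous fun s : ℝ ↦ ((c : ℂ) + s * I) ^ (-n : ℤ) :=
    Continuous.zpow₀ (by fun_prop) _ fun s ↦ .inl (add_ofReal_mul_I_ne_zero hc s)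
  refine Integrable.mul_bdd (c := (c ^ n)⁻¹) hf h_cont.aestronglyMeasurable (.of_forall fun s ↦ ?_)
  rw [zpow_neg, norm_inv, zpow_natCast, norm_pow]
  gcongr
  exact le_norm_add_ofReal_mul_I c s

lemma integrable_cexp_quadratic_vertical_mul_exp (c : ℝ) {p : ℂ} (hp : 0 < p.re) (q : ℂ) (t : ℝ) :
    Integrable fun s : ℝ ↦
      exp (p * (c + s * I) ^ 2 + q * (c + s * I)) * (Real.exp (t * s) : ℂ) := by
  refine (integrable_cexp_quadratic hp (2 * c * p * I + q * I + t) (p * c ^ 2 + q * c)).congr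
    (.of_forall fun s ↦ ?_)
  simp only [ofReal_exp, ← exp_add, ofReal_mul]
  congr 1
  linear_combination (-p * s ^ 2) * I_sq

lemma verticalIntegrable_cexp_quadratic_mul_pow (c : ℝ) {p : ℂ} (hp : 0 < p.re) (q : ℂ) (n : ℕ) :
    VerticalIntegrable (fun w ↦ exp (p * w ^ 2 + q * w) * w ^ n) c := by
  have h_bound := ((integrable_cexp_quadratic_vertical_mul_exp c hp q 1).norm.add
    (integrable_cexp_quadratic_vertical_mul_exp c hp q (-1)).norm).const_mul
      (n.factorial * Real.exp |c|)
  refine h_bound.mono' (by fun_prop) (.of_forall fun s ↦ ?_)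
  simp only [Pi.add_apply, norm_mul, norm_pow, norm_real, Real.norm_eq_abs, Real.abs_exp, one_mul,
    neg_one_mul, ← mul_add]
  grw [norm_add_ofReal_mul_I_pow_le c s n]
  exact (mul_left_comm _ _ _).le

lemma verticalIntegrable_cexp_quadratic_mul_zpow (hc : 0 < c) {p : ℂ} (hp : 0 < p.re) (q : ℂ)
    (k : ℤ) : VerticalIntegrable (fun w ↦ exp (p * w ^ 2 + q * w) * w ^ k) c := by
  obtain ⟨n, rfl | rfl⟩ := k.eq_nat_or_neg
  · simpa only [zpow_natCast] using verticalIntegrable_cexp_quadratic_mul_pow c hp q n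
  · have h_gauss : VerticalIntegrable (fun w ↦ exp (p * w ^ 2 + q * w)) c := by
      simpa only [pow_zero, mul_one] using verticalIntegrable_cexp_quadratic_mul_pow c hp q 0
    exact verticalIntegrable_mul_zpow_neg hc h_gauss n

lemma circleIntegral_integral_swap {E α : Type*} [NormedAddCommGroup E] [NormedSpace ℂ E]
    [MeasurableSpace α] {μ : Measure α} [SFinite μ] {f : ℂ → α → E} {z₀ : ℂ}
    (hf : Integrable (fun p : ℝ × α ↦ f (circleMap z₀ r p.1) p.2)
      ((volume.restrict (Set.uIoc 0 (2 * π))).prod μ)) :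
    (∮ z in C(z₀, r), ∫ a, f z a ∂μ) = ∫ a, ∮ z in C(z₀, r), f z a ∂μ := by
  have h_meas : Measurable fun p : ℝ × α ↦ circleMap 0 r p.1 * I := by fun_prop
  simp only [circleIntegral, ← integral_smul, deriv_circleMap]
  exact intervalIntegral_integral_swap <| hf.bdd_smul (C := |r|)
    h_meas.aestronglyMeasurable (.of_forall fun p ↦ by simp)

lemma inv_sub_mul_zpow_eq_sum_add {F : Type*} [Field F] {w z : F} (hw : w ≠ 0) (hz : z ≠ 0)
    (hwz : w - z ≠ 0) (k : ℤ) (N : ℕ) :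
    (w - z)⁻¹ * z ^ k = ∑ m ∈ Finset.range N, w ^ (-m - 1 : ℤ) * z ^ (k + m)
      + w ^ (-N : ℤ) * ((w - z)⁻¹ * z ^ (k + N)) := by
  induction N with
  | zero => simp
  | succ N ih =>
    rw [Finset.sum_range_succ, add_assoc]
    refine ih.trans (congrArg _ ?_)
    rw [Nat.cast_succ, neg_add', zpow_sub_one₀ hw, ← add_assoc, zpow_add_one₀ hz]
    field_simp
    ring

lemma sub_ne_zero_of_mem_closedBall {w z : ℂ} (hw : r < ‖w‖) (hz : z ∈ closedBall 0 r) :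
    w - z ≠ 0 := by
  rw [sub_ne_zero]
  rintro rfl
  exact hw.not_ge (by simpa using hz)

lemma circleIntegrable_mul_zpow {g : ℂ → ℂ} (hr : 0 < r) (hg : ContinuousOn g (sphere 0 r))
    (k : ℤ) : CircleIntegrable (fun z ↦ g z * z ^ k) 0 r :=
  (hg.mul (continuousOn_id.zpow₀ k fun z hz ↦
    .inl (ne_zero_of_mem_sphere hr.ne' ⟨z, hz⟩))).circleIntegrable hr.le

/- Expand the Cauchy kernel as a finite geometric sum: the remainder
`w ^ (-N) * g z * z ^ (k + N) / (w - z)` is holomorphic in the disc, so its integral vanishes. -/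
lemma circleIntegral_inv_sub_mul_zpow {g : ℂ → ℂ} {w : ℂ} {k : ℤ} {N : ℕ} (hr : 0 < r)
    (hg : DiffContOnCl ℂ g (ball 0 r)) (hw : r < ‖w‖) (hkN : 0 ≤ k + N) :
    (∮ z in C(0, r), (w - z)⁻¹ * (g z * z ^ k)) =
      ∑ m ∈ Finset.range N, w ^ (-m - 1 : ℤ) * ∮ z in C(0, r), g z * z ^ (k + m) := by
  obtain ⟨n, hn⟩ := Int.eq_ofNat_of_zero_le hkN
  have hg_sphere : ContinuousOn g (sphere 0 r) :=
    hg.continuousOn_ball.mono sphere_subset_closedBall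
  have hwz : ∀ z ∈ closedBall 0 r, w - z ≠ 0 := fun z ↦ sub_ne_zero_of_mem_closedBall hw
  have h_rem : DiffContOnCl ℂ (fun z ↦ (w - z)⁻¹ • z ^ n • g z) (ball 0 r) :=
    .smul (.inv (Differentiable.diffContOnCl (by fun_prop))
      fun z hz ↦ hwz z (closure_ball_subset_closedBall hz))
      (.smul (Differentiable.diffContOnCl (by fun_prop)) hg)
  have h_rem_int : CircleIntegrable (fun z ↦ w ^ (-N : ℤ) * (w - z)⁻¹ • z ^ n • g z) 0 r :=
    ((h_rem.continuousOn_ball.mono sphere_subset_closedBall).circleIntegrable hr.le).const_smul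
  have h_int (m : ℕ) : CircleIntegrable (fun z ↦ w ^ (-m - 1 : ℤ) * (g z * z ^ (k + m))) 0 r :=
    (circleIntegrable_mul_zpow hr hg_sphere (k + m)).const_smul
  have h_expand : ∀ z ∈ sphere (0 : ℂ) r, (w - z)⁻¹ * (g z * z ^ k) =
      ∑ m ∈ Finset.range N, w ^ (-m - 1 : ℤ) * (g z * z ^ (k + m))
        + w ^ (-N : ℤ) * (w - z)⁻¹ • z ^ n • g z := by
    intro z hz
    rw [mul_left_comm, inv_sub_mul_zpow_eq_sum_add (norm_pos_iff.1 (hr.trans hw))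
      (ne_zero_of_mem_sphere hr.ne' ⟨z, hz⟩) (hwz z (sphere_subset_closedBall hz)) k N, hn,
      mul_add, Finset.mul_sum]
    simp only [smul_eq_mul, zpow_natCast, mul_left_comm (g z), mul_comm (g z)]
  rw [circleIntegral.integral_congr hr.le h_expand,
    circleIntegral.integral_add (CircleIntegrable.fun_sum _ fun m _ ↦ h_int m) h_rem_int,
    circleIntegral.integral_fun_sum fun m _ ↦ h_int m]
  simp only [circleIntegral.integral_const_mul, h_rem.circleIntegral_eq_zero hr.le, mul_zero,
    add_zero]

lemma integrable_cauchyKernel_mul_prod {g h : ℂ → ℂ} (hr : 0 < r)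
    (hrc : r < c) (hg : CircleIntegrable g 0 r) (hh : VerticalIntegrable h c) :
    Integrable (fun p : ℝ × ℝ ↦ (c + p.2 * I - circleMap 0 r p.1)⁻¹ *
        (g (circleMap 0 r p.1) * h (c + p.2 * I)))
      ((volume.restrict (Set.uIoc 0 (2 * π))).prod volume) := by
  have h_dist (p : ℝ × ℝ) : c - r ≤ ‖c + p.2 * I - circleMap 0 r p.1‖ := by
    have h_sub := norm_sub_norm_le (c + p.2 * I) (circleMap 0 r p.1)
    rw [norm_circleMap_zero, abs_of_pos hr] at h_sub
    linarith [le_norm_add_ofReal_mul_I c p.2]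
  have h_meas : Measurable fun p : ℝ × ℝ ↦ (c + p.2 * I - circleMap 0 r p.1)⁻¹ := by fun_prop
  refine (hg.def'.mul_prod hh).bdd_mul (c := (c - r)⁻¹) h_meas.aestronglyMeasurable
    (.of_forall fun p ↦ ?_)
  rw [norm_inv]
  exact inv_anti₀ (sub_pos.2 hrc) (h_dist p)

lemma circleIntegral_lineInt_inv_sub {g h : ℂ → ℂ} {k : ℤ} {N : ℕ} (hr : 0 < r) (hrc : r < c)
    (hg : DiffContOnCl ℂ g (ball 0 r)) (hh : VerticalIntegrable h c) (hkN : 0 ≤ k + N) :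
    (∮ z in C(0, r), lineInt c fun w ↦ (w - z)⁻¹ * (g z * z ^ k * h w)) =
      ∑ m ∈ Finset.range N,
        (∮ z in C(0, r), g z * z ^ (k + m)) * lineInt c fun w ↦ h w * w ^ (-m - 1 : ℤ) := by
  have hg_sphere : ContinuousOn g (sphere 0 r) :=
    hg.continuousOn_ball.mono sphere_subset_closedBall
  have h_prod := (integrable_cauchyKernel_mul_prod hr hrc
    (circleIntegrable_mul_zpow hr hg_sphere k) hh).mul_const I
  have h_line (m : ℕ) : Integrable fun s : ℝ ↦
      h (c + s * I) * (c + s * I) ^ (-m - 1 : ℤ) * I := by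
    have h_pow := verticalIntegrable_mul_zpow_neg (hr.trans hrc) hh (m + 1)
    rw [Nat.cast_succ, neg_add'] at h_pow
    exact Integrable.mul_const h_pow I
  have h_inner (s : ℝ) : (∮ z in C(0, r),
      (c + s * I - z)⁻¹ * (g z * z ^ k * h (c + s * I)) * I) =
      ∑ m ∈ Finset.range N, (∮ z in C(0, r), g z * z ^ (k + m)) *
        (h (c + s * I) * (c + s * I) ^ (-m - 1 : ℤ) * I) := by
    have h_norm := hrc.trans_le (le_norm_add_ofReal_mul_I c s)
    calc _ = (∮ z in C(0, r), (h (c + s * I) * I) * ((c + s * I - z)⁻¹ * (g z * z ^ k))) := by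
          congr! 2; ring
      _ = _ := by
          rw [circleIntegral.integral_const_mul, circleIntegral_inv_sub_mul_zpow hr hg h_norm hkN,
            Finset.mul_sum]
          exact Finset.sum_congr rfl fun m _ ↦ by ring
  simp only [lineInt]
  rw [circleIntegral_integral_swap h_prod]
  simp only [h_inner]
  rw [integral_finsetSum _ fun m _ ↦ (h_line m).const_mul _]
  simp only [integral_const_mul]

end ContourIntegrals

section Resolvent

variable {n α : Type*} [Fintype n] [CommRing α] {Φ Ψ R : Matrix n n α}

lemma dotProduct_mulVec_comm_of_isSymm (hΦ : Φ.IsSymm) (v w : n → α) :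
    v ⬝ᵥ (Φ *ᵥ w) = w ⬝ᵥ (Φ *ᵥ v) := by
  rw [Matrix.dotProduct_mulVec, ← Matrix.mulVec_transpose, hΦ.eq, dotProduct_comm]

variable [DecidableEq n]

lemma transpose_mul_one_sub_mul (hΦ : Φ.IsSymm) (hΨ : Ψ.IsSymm) (hR : (1 - Ψ * Φ) * R = 1) :
    Rᵀ * (1 - Φ * Ψ) = 1 := by
  simpa [Matrix.transpose_mul, hΦ.eq, hΨ.eq] using congrArg Matrix.transpose hR

lemma isSymm_mul_resolvent (hΦ : Φ.IsSymm) (hΨ : Ψ.IsSymm) (hR : (1 - Ψ * Φ) * R = 1) :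
    (Φ * R).IsSymm := by
  have hRt := transpose_mul_one_sub_mul hΦ hΨ hR
  calc (Φ * R)ᵀ = Rᵀ * Φ := by rw [Matrix.transpose_mul, hΦ.eq]
    _ = Rᵀ * Φ * ((1 - Ψ * Φ) * R) := by rw [hR, mul_one]
    _ = Rᵀ * (1 - Φ * Ψ) * (Φ * R) := by noncomm_ring
    _ = Φ * R := by rw [hRt, one_mul]

lemma isSymm_resolvent_mul (hΦ : Φ.IsSymm) (hΨ : Ψ.IsSymm) (hR : (1 - Ψ * Φ) * R = 1) :
    (R * Ψ).IsSymm := by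
  have h := isSymm_mul_resolvent hΨ hΦ (mul_eq_one_comm.1 (transpose_mul_one_sub_mul hΦ hΨ hR))
  simpa [Matrix.transpose_mul, hΨ.eq] using h.transpose

lemma mul_resolvent_mul (hΦ : Φ.IsSymm) (hΨ : Ψ.IsSymm) (hR : (1 - Ψ * Φ) * R = 1) :
    Φ * R * Ψ = Rᵀ - 1 := by
  rw [← (isSymm_mul_resolvent hΦ hΨ hR).eq, Matrix.transpose_mul, hΦ.eq,
    ← transpose_mul_one_sub_mul hΦ hΨ hR]
  noncomm_ring

lemma dotProduct_add_resolvent_eq (hΦ : Φ.IsSymm) (hΨ : Ψ.IsSymm) (hR : (1 - Ψ * Φ) * R = 1)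
    (a b a' b' : n → α) :
    a ⬝ᵥ b + (a' - Φ *ᵥ b) ⬝ᵥ (R *ᵥ (b' - Ψ *ᵥ a)) =
      a ⬝ᵥ (R *ᵥ b) + a' ⬝ᵥ (R *ᵥ b') - a' ⬝ᵥ ((R * Ψ) *ᵥ a) - b ⬝ᵥ ((Φ * R) *ᵥ b') := by
  have h_move (v : n → α) : (Φ *ᵥ b) ⬝ᵥ v = b ⬝ᵥ (Φ *ᵥ v) := by
    rw [dotProduct_comm, dotProduct_mulVec_comm_of_isSymm hΦ]
  have h_quad : b ⬝ᵥ ((Φ * R * Ψ) *ᵥ a) = a ⬝ᵥ (R *ᵥ b) - a ⬝ᵥ b := by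
    rw [mul_resolvent_mul hΦ hΨ hR, Matrix.sub_mulVec, Matrix.one_mulVec, dotProduct_sub,
      Matrix.mulVec_transpose, dotProduct_comm b, dotProduct_comm b, Matrix.dotProduct_mulVec]
  simp only [sub_dotProduct, Matrix.mulVec_sub, dotProduct_sub, h_move, Matrix.mulVec_mulVec,
    ← Matrix.mul_assoc, h_quad]
  ring

lemma dotProduct_add_resolvent_swap (hΦ : Φ.IsSymm) (hΨ : Ψ.IsSymm) (hR : (1 - Ψ * Φ) * R = 1)
    (a b a' b' : n → α) :
    a ⬝ᵥ b + (a' - Φ *ᵥ b) ⬝ᵥ (R *ᵥ (b' - Ψ *ᵥ a)) =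
      a' ⬝ᵥ b' + (a - Φ *ᵥ b') ⬝ᵥ (R *ᵥ (b - Ψ *ᵥ a')) := by
  rw [dotProduct_add_resolvent_eq hΦ hΨ hR, dotProduct_add_resolvent_eq hΦ hΨ hR,
    dotProduct_mulVec_comm_of_isSymm (isSymm_resolvent_mul hΦ hΨ hR) a' a,
    dotProduct_mulVec_comm_of_isSymm (isSymm_mul_resolvent hΦ hΨ hR) b b', add_comm (a ⬝ᵥ _)]

variable {N : ℕ}

lemma one_sub_mul_eq_one_of_resolvent {K : Matrix (Fin N) (Fin N) α} {S : Fin N → ℕ → α}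
    (hS : ∀ i k, S i k - ∑ j, K i j * S j k = if (i : ℕ) = k then 1 else 0) :
    (1 - K) * Matrix.of (fun i j : Fin N ↦ S i j) = 1 := by
  ext i k
  rw [sub_mul, one_mul, Matrix.sub_apply, Matrix.mul_apply, Matrix.one_apply]
  simpa only [Matrix.of_apply, Fin.ext_iff] using hS i k

lemma resolvent_eq_zero_of_le {K : Matrix (Fin N) (Fin N) α} {S : Fin N → ℕ → α}
    (hS : ∀ i k, S i k - ∑ j, K i j * S j k = if (i : ℕ) = k then 1 else 0) (i : Fin N) {k : ℕ}
    (hk : N ≤ k) : S i k = 0 := by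
  have h_col : (1 - K) *ᵥ (fun j ↦ S j k) = 0 := by
    ext j
    rw [Matrix.sub_mulVec, Matrix.one_mulVec]
    exact (hS j k).trans (if_neg (j.2.trans_le hk).ne)
  calc S i k = ((Matrix.of (fun i j : Fin N ↦ S i j) * (1 - K)) *ᵥ (fun j ↦ S j k)) i := by
        rw [mul_eq_one_comm.1 (one_sub_mul_eq_one_of_resolvent hS), Matrix.one_mulVec]
    _ = 0 := by rw [← Matrix.mulVec_mulVec, h_col, Matrix.mulVec_zero, Pi.zero_apply]

end Resolvent

lemma tsum_int_ge_eq_sum {E : Type*} [AddCommMonoid E] [TopologicalSpace E] {ρ : ℤ} {f : ℤ → E}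
    {N : ℕ} (hf : ∀ i : ℕ, N ≤ i → f (-ρ + i) = 0) :
    ∑' j : {j : ℤ // -ρ ≤ j}, f j = ∑ i : Fin N, f (-ρ + (i : ℕ)) := by
  let e : ℕ ≃ {j : ℤ // -ρ ≤ j} :=
    { toFun := fun i ↦ ⟨-ρ + i, by lia⟩
      invFun := fun j ↦ (j + ρ).toNat
      left_inv := fun i ↦ by simp
      right_inv := fun ⟨j, hj⟩ ↦ Subtype.ext (by simp only; lia) }
  have h_supp : ∀ i ∉ Finset.range N, f (e i) = 0 := fun i hi ↦ hf i (by simpa using hi)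
  rw [← e.tsum_eq, tsum_eq_sum h_supp, Finset.sum_range]
  rfl

lemma tsum_int_ge_eq_dotProduct_mulVec {α : Type*} [CommSemiring α] [TopologicalSpace α] {ρ : ℤ}
    {R : ℤ → ℤ → α} {A B : ℤ → α} {N : ℕ} (hB : ∀ i : ℕ, N ≤ i → B (-ρ + i) = 0)
    (hR : ∀ (i : Fin N) (k : ℕ), N ≤ k → R (-ρ + (i : ℕ)) (-ρ + k) = 0) :
    ∑' (i : {j : ℤ // -ρ ≤ j}) (k : {j : ℤ // -ρ ≤ j}), R i k * A k * B i =
      (fun i : Fin N ↦ B (-ρ + (i : ℕ))) ⬝ᵥ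
        (Matrix.of (fun i k : Fin N ↦ R (-ρ + (i : ℕ)) (-ρ + (k : ℕ))) *ᵥ
          fun k : Fin N ↦ A (-ρ + (k : ℕ))) := by
  rw [tsum_int_ge_eq_sum (f := fun i ↦ ∑' k : {j : ℤ // -ρ ≤ j}, R i k * A k * B i)
    fun i hi ↦ by simp only [hB i hi, mul_zero, tsum_zero]]
  refine Finset.sum_congr rfl fun i _ ↦ ?_
  rw [tsum_int_ge_eq_sum (f := fun k ↦ R (-ρ + (i : ℕ)) k * A k * B (-ρ + (i : ℕ)))
    fun k hk ↦ by simp only [hR i k hk, zero_mul], ← Finset.sum_mul, mul_comm]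
  rfl

section Moments

/-- The normalised moment `∮_{Γ₀} dz/(2πi) e^{-az² + 2xz} z^k` over the circle of radius `r`. -/
noncomputable def circleMoment (r a x : ℝ) (k : ℤ) : ℂ :=
  (2 * π * I)⁻¹ * ∮ z in C(0, r), exp (-(a * z ^ 2 - 2 * x * z)) * z ^ k

/-- The normalised moment `∫_L dw/(2πi) e^{aw² - 2xw} w^k` over the vertical line `Re w = c`; its
weight is the reciprocal of that of `circleMoment`. -/
noncomputable def lineMoment (c a x : ℝ) (k : ℤ) : ℂ :=
  (2 * π * I)⁻¹ * lineInt c fun w ↦ exp (a * w ^ 2 - 2 * x * w) * w ^ k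

/-- The normalised double moment of the weights of `circleMoment` and `lineMoment`, coupled by the
Cauchy kernel `1 / (w - z)`. -/
noncomputable def cauchyMoment (r c a x : ℝ) (k : ℤ) (a' x' : ℝ) (k' : ℤ) : ℂ :=
  ((2 * π * I) ^ 2)⁻¹ * ∮ z in C(0, r), lineInt c fun w ↦
    (w - z)⁻¹ * (exp (-(a * z ^ 2 - 2 * x * z)) * z ^ k *
      (exp (a' * w ^ 2 - 2 * x' * w) * w ^ k'))

variable {r c a' : ℝ}

lemma circleMoment_eq_zero (hr : 0 < r) (a x : ℝ) {k : ℤ} (hk : 0 ≤ k) :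
    circleMoment r a x k = 0 := by
  lift k to ℕ using hk
  have h_diff : Differentiable ℂ fun z : ℂ ↦ exp (-(a * z ^ 2 - 2 * x * z)) * z ^ (k : ℤ) := by
    simp only [zpow_natCast]
    fun_prop
  rw [circleMoment, h_diff.diffContOnCl.circleIntegral_eq_zero hr.le, mul_zero]

lemma cauchyMoment_eq_sum (hr : 0 < r) (hrc : r < c) (ha' : 0 < a') (a x x' : ℝ) {k : ℤ} (k' : ℤ)
    {N : ℕ} (hkN : 0 ≤ k + N) :
    cauchyMoment r c a x k a' x' k' =
      ∑ m : Fin N, circleMoment r a x (k + (m : ℕ)) * lineMoment c a' x' (k' - (m : ℕ) - 1) := by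
  have hc : 0 < c := hr.trans hrc
  have h_circle : DiffContOnCl ℂ (fun z : ℂ ↦ exp (-(a * z ^ 2 - 2 * x * z))) (ball 0 r) :=
    Differentiable.diffContOnCl (by fun_prop)
  have h_line : VerticalIntegrable (fun w ↦ exp (a' * w ^ 2 - 2 * x' * w) * w ^ k') c := by
    simpa only [neg_mul, ← sub_eq_add_neg] using
      verticalIntegrable_cexp_quadratic_mul_zpow hc (p := a') (by simpa) (-2 * x') k'
  have h_zpow (m : ℕ) : lineInt c (fun w ↦ exp (a' * w ^ 2 - 2 * x' * w) * w ^ k' *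
      w ^ (-m - 1 : ℤ)) = lineInt c fun w ↦ exp (a' * w ^ 2 - 2 * x' * w) * w ^ (k' - m - 1) := by
    unfold lineInt
    congr! 3 with s
    beta_reduce
    rw [mul_assoc, ← zpow_add₀ (add_ofReal_mul_I_ne_zero hc s)]
    ring_nf
  rw [cauchyMoment, circleIntegral_lineInt_inv_sub hr hrc h_circle h_line hkN, Finset.sum_range,
    Finset.mul_sum]
  refine Finset.sum_congr rfl fun m _ ↦ ?_
  rw [h_zpow, circleMoment, lineMoment]
  ring

lemma cauchyMoment_eq_zero (hr : 0 < r) (hrc : r < c) (ha' : 0 < a') (a x x' : ℝ) {k : ℤ}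
    (k' : ℤ) (hk : 0 ≤ k) : cauchyMoment r c a x k a' x' k' = 0 := by
  simp [cauchyMoment_eq_sum hr hrc ha' a x x' k' (N := 0) (by simpa)]

lemma Kminor_eq_cauchyMoment (r c : ℝ) (n n' : ℤ) (x x' : ℝ) :
    Kminor r c n n' x x' = -(if n' < n then 1 else 0) * 2 ^ (n - n') * (Hm (n - n') (x - x') : ℂ)
      + 2 * cauchyMoment r c 1 x (-n) 1 x' n' := by
  rw [Kminor, cauchyMoment, div_eq_mul_inv, mul_assoc 2]
  congr! 7 with z w
  rw [div_eq_mul_inv (exp _), ← exp_neg, zpow_neg]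
  push_cast
  ring_nf

lemma Kbeta_eq_cauchyMoment (r c β : ℝ) (lam κ : ℤ) :
    Kbeta r c β lam κ = cauchyMoment r c 2 (2 * β) κ 2 (2 * β) (-lam - 1) := by
  rw [Kbeta, cauchyMoment]
  congr! 5 with z w
  rw [div_eq_mul_inv (exp _), ← exp_neg, ← neg_add', zpow_neg]
  push_cast
  ring_nf

lemma circleIntegral_lineInt_neg (r c : ℝ) (F : ℂ → ℂ → ℂ) :
    (∮ z in C(0, r), lineInt c fun w ↦ -F z w) = -∮ z in C(0, r), lineInt c (F z) := by
  simp [circleIntegral, lineInt, integral_neg]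

lemma calA_eq_sub_cauchyMoment (r c β y : ℝ) (v κ : ℤ) :
    calA r c β y v κ = lineMoment c 1 (y + 2 * β) (-v - κ - 1)
      - cauchyMoment r c 1 (-y) (-v) 2 (2 * β) (-κ - 1) := by
  rw [calA, cauchyMoment, lineMoment, sub_eq_neg_add, ← mul_neg, ← circleIntegral_lineInt_neg]
  congr 1
  · congr! 5 with z w
    rw [div_eq_mul_inv (exp _), ← exp_neg, ← neg_sub w z, inv_neg, ← neg_add' κ, zpow_neg w]
    push_cast
    ring_nf
  · congr! 3 with w
    rw [← neg_add', ← neg_add', zpow_neg]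
    push_cast
    ring_nf

lemma calB_eq_sub_cauchyMoment (r c β y : ℝ) (u lam : ℤ) :
    calB r c β y u lam = circleMoment r 1 (y + 2 * β) (u + lam)
      - cauchyMoment r c 2 (2 * β) lam 1 (-y) u := by
  rw [calB, cauchyMoment, circleMoment, sub_eq_neg_add, ← mul_neg, ← circleIntegral_lineInt_neg]
  congr 1
  · congr! 5 with z w
    rw [div_eq_mul_inv (exp _), ← exp_neg, ← neg_sub w z, inv_neg]
    push_cast
    ring_nf
  · congr! 3 with w
    rw [div_eq_mul_inv, ← exp_neg]
    push_cast
    ring_nf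

end Moments

section Truncation

variable {r c β : ℝ} {ρ : ℤ} {N : ℕ} {R : ℤ → ℤ → ℂ}

/-- The vector of moments on `Γ₀` that `K^minor(u, β - y; ·, ·)` contributes, truncated to `N`
entries. -/
noncomputable def circleMomentVec (r β : ℝ) (N : ℕ) (u : ℤ) (y : ℝ) : Fin N → ℂ :=
  fun i ↦ circleMoment r 1 (β - y) (-u + (i : ℕ))

/-- The vector of moments on `L` that `K^minor(·, ·; u, β - y)` contributes, truncated to `N`
entries. -/
noncomputable def lineMomentVec (c β : ℝ) (N : ℕ) (u : ℤ) (y : ℝ) : Fin N → ℂ :=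
  fun i ↦ lineMoment c 1 (β - y) (u - (i : ℕ) - 1)

/-- The truncated Hankel matrix `Φ` of moments on `Γ₀` in the factorisation `K^β = ΨΦ`, where
`Ψ` is `lineHankel`. The indices `i`, `j` stand for `-ρ + i`, `-ρ + j`. -/
noncomputable def circleHankel (r β : ℝ) (ρ : ℤ) (N : ℕ) : Matrix (Fin N) (Fin N) ℂ :=
  Matrix.of fun i j ↦ circleMoment r 2 (2 * β) (-ρ + (i : ℕ) + (j : ℕ))

/-- The truncated Hankel matrix `Ψ` of moments on `L` in the factorisation `K^β = ΨΦ`, where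
`Φ` is `circleHankel`. The indices `i`, `j` stand for `-ρ + i`, `-ρ + j`. -/
noncomputable def lineHankel (c β : ℝ) (ρ : ℤ) (N : ℕ) : Matrix (Fin N) (Fin N) ℂ :=
  Matrix.of fun i j ↦ lineMoment c 2 (2 * β) (ρ - (i : ℕ) - (j : ℕ) - 2)

lemma isSymm_circleHankel (r β : ℝ) (ρ : ℤ) (N : ℕ) : (circleHankel r β ρ N).IsSymm := by
  ext i j
  simp only [circleHankel, Matrix.transpose_apply, Matrix.of_apply, add_right_comm]

lemma isSymm_lineHankel (c β : ℝ) (ρ : ℤ) (N : ℕ) : (lineHankel c β ρ N).IsSymm := by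
  ext i j
  simp only [lineHankel, Matrix.transpose_apply, Matrix.of_apply, sub_right_comm]

lemma Kminor_eq_dotProduct (hr : 0 < r) (hrc : r < c) {u₁ u₂ : ℤ} (hu₁ : u₁ ≤ N) (y₁ y₂ : ℝ) :
    Kminor r c u₁ u₂ (β - y₁) (β - y₂) =
      -(if u₂ < u₁ then 1 else 0) * 2 ^ (u₁ - u₂) * (Hm (u₁ - u₂) (y₂ - y₁) : ℂ)
        + 2 * (circleMomentVec r β N u₁ y₁ ⬝ᵥ lineMomentVec c β N u₂ y₂) := by
  rw [Kminor_eq_cauchyMoment, cauchyMoment_eq_sum hr hrc one_pos (N := N) _ _ _ _ (by lia),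
    sub_sub_sub_cancel_left]
  rfl

lemma Kbeta_eq_mul_apply (hr : 0 < r) (hrc : r < c) (hρ : ρ ≤ N) (i j : Fin N) :
    Kbeta r c β (-ρ + (i : ℕ)) (-ρ + (j : ℕ)) =
      (lineHankel c β ρ N * circleHankel r β ρ N) i j := by
  rw [Kbeta_eq_cauchyMoment, cauchyMoment_eq_sum hr hrc two_pos (N := N) _ _ _ _ (by lia),
    Matrix.mul_apply]
  refine Finset.sum_congr rfl fun m _ ↦ ?_
  rw [lineHankel, circleHankel, Matrix.of_apply, Matrix.of_apply, mul_comm]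
  ring_nf

lemma calA_eq_sub_mulVec (hr : 0 < r) (hrc : r < c) {u : ℤ} (hu : u ≤ N) (y : ℝ) (i : Fin N) :
    calA r c β (y - β) u (-ρ + (i : ℕ)) =
      (lineMomentVec c β N (ρ - u) (-y) - lineHankel c β ρ N *ᵥ circleMomentVec r β N u y) i := by
  rw [calA_eq_sub_cauchyMoment, cauchyMoment_eq_sum hr hrc two_pos (N := N) _ _ _ _ (by lia),
    Pi.sub_apply, lineMomentVec, Matrix.mulVec, dotProduct]
  congr 1
  · ring_nf
  · refine Finset.sum_congr rfl fun m _ ↦ ?_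
    rw [lineHankel, circleMomentVec, Matrix.of_apply, mul_comm]
    ring_nf

lemma calB_eq_sub_mulVec (hr : 0 < r) (hrc : r < c) (hρ : ρ ≤ N) (u : ℤ) (y : ℝ) (i : Fin N) :
    calB r c β (y - β) u (-ρ + (i : ℕ)) =
      (circleMomentVec r β N (ρ - u) (-y) - circleHankel r β ρ N *ᵥ lineMomentVec c β N u y) i := by
  rw [calB_eq_sub_cauchyMoment, cauchyMoment_eq_sum hr hrc one_pos (N := N) _ _ _ _ (by lia),
    Pi.sub_apply, circleMomentVec, Matrix.mulVec, dotProduct]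
  congr 1
  · ring_nf
  · refine Finset.sum_congr rfl fun m _ ↦ ?_
    rw [circleHankel, lineMomentVec, Matrix.of_apply]
    ring_nf

lemma Kbeta_eq_zero (hr : 0 < r) (hrc : r < c) (lam : ℤ) {κ : ℤ} (hκ : 0 ≤ κ) :
    Kbeta r c β lam κ = 0 := by
  rw [Kbeta_eq_cauchyMoment, cauchyMoment_eq_zero hr hrc two_pos _ _ _ _ hκ]

lemma calB_eq_zero (hr : 0 < r) (hrc : r < c) (y : ℝ) {u lam : ℤ} (hlam : 0 ≤ lam)
    (hu : 0 ≤ u + lam) : calB r c β y u lam = 0 := by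
  rw [calB_eq_sub_cauchyMoment, circleMoment_eq_zero hr _ _ hu,
    cauchyMoment_eq_zero hr hrc one_pos _ _ _ _ hlam, sub_zero]

lemma truncated_resolvent_apply (hr : 0 < r) (hrc : r < c) (hρ : ρ ≤ N)
    (hres : ∀ lam κ : ℤ, -ρ ≤ lam → -ρ ≤ κ →
      R lam κ - ∑' j : {j : ℤ // -ρ ≤ j}, Kbeta r c β lam (j : ℤ) * R (j : ℤ) κ
        = if lam = κ then 1 else 0) (i : Fin N) (k : ℕ) :
    R (-ρ + (i : ℕ)) (-ρ + k) - ∑ j : Fin N,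
        (lineHankel c β ρ N * circleHankel r β ρ N) i j * R (-ρ + (j : ℕ)) (-ρ + k)
      = if (i : ℕ) = k then 1 else 0 := by
  have h_tail (j : ℕ) (hj : N ≤ j) :
      Kbeta r c β (-ρ + (i : ℕ)) (-ρ + j) * R (-ρ + j) (-ρ + k) = 0 := by
    rw [Kbeta_eq_zero hr hrc _ (by lia), zero_mul]
  have h_full := hres (-ρ + (i : ℕ)) (-ρ + k) (by lia) (by lia)
  rw [tsum_int_ge_eq_sum (f := fun j ↦ Kbeta r c β (-ρ + (i : ℕ)) j * R j (-ρ + k)) h_tail]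
    at h_full
  simpa only [Kbeta_eq_mul_apply hr hrc hρ, add_right_inj, Nat.cast_inj] using h_full

theorem Ktac_eq_dotProduct (hr : 0 < r) (hrc : r < c) {u₁ u₂ : ℤ} (hρ : ρ ≤ N)
    (hu₁ : u₁ ≤ N) (hu₂ : ρ - u₂ ≤ N) (y₁ y₂ : ℝ)
    (hR : ∀ (i : Fin N) (k : ℕ), N ≤ k → R (-ρ + (i : ℕ)) (-ρ + k) = 0) :
    Ktac r c β ρ R u₁ y₁ u₂ y₂ =
      -(if u₂ < u₁ then 1 else 0) * 2 ^ (u₁ - u₂) * (Hm (u₁ - u₂) (y₂ - y₁) : ℂ)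
        + 2 * (circleMomentVec r β N u₁ y₁ ⬝ᵥ lineMomentVec c β N u₂ y₂ +
          (circleMomentVec r β N (ρ - u₂) (-y₂)
            - circleHankel r β ρ N *ᵥ lineMomentVec c β N u₂ y₂) ⬝ᵥ
          (Matrix.of (fun i j : Fin N ↦ R (-ρ + (i : ℕ)) (-ρ + (j : ℕ))) *ᵥ
            (lineMomentVec c β N (ρ - u₁) (-y₁)
              - lineHankel c β ρ N *ᵥ circleMomentVec r β N u₁ y₁))) := by
  have h_tail (i : ℕ) (hi : N ≤ i) : calB r c β (y₂ - β) u₂ (-ρ + i) = 0 :=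
    calB_eq_zero hr hrc _ (by lia) (by lia)
  rw [Ktac, Kminor_eq_dotProduct hr hrc hu₁, tsum_int_ge_eq_dotProduct_mulVec h_tail hR,
    funext (calA_eq_sub_mulVec hr hrc hu₁ y₁), funext (calB_eq_sub_mulVec hr hrc hρ u₂ y₂),
    mul_add, add_assoc]

end Truncation

/-- The tacnode GUE-minor kernel is invariant under the involution
`(u1, y1, u2, y2) ↦ (ρ−u2, −y2, ρ−u1, −y1)`. -/
theorem stmt11 (r0 c β : ℝ) (h0 : 0 < r0) (hrc : r0 < c) (ρ : ℤ)
    (R : ℤ → ℤ → ℂ)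
    (hres : ∀ lam κ : ℤ, -ρ ≤ lam → -ρ ≤ κ →
      R lam κ - ∑' j : {j : ℤ // -ρ ≤ j}, Kbeta r0 c β lam (j : ℤ) * R (j : ℤ) κ
        = if lam = κ then 1 else 0)
    (u1 u2 : ℤ) (y1 y2 : ℝ) :
    Ktac r0 c β ρ R u1 y1 u2 y2 = Ktac r0 c β ρ R (ρ - u2) (-y2) (ρ - u1) (-y1) := by
  obtain ⟨N, hρ, hu1, hu2⟩ : ∃ N : ℕ, ρ ≤ N ∧ u1 ≤ N ∧ ρ - u2 ≤ N :=
    ⟨ρ.natAbs + u1.natAbs + u2.natAbs, by lia, by lia, by lia⟩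
  have h_trunc := truncated_resolvent_apply h0 hrc hρ hres
  have hR := resolvent_eq_zero_of_le h_trunc
  rw [Ktac_eq_dotProduct h0 hrc hρ hu1 hu2 y1 y2 hR,
    Ktac_eq_dotProduct h0 hrc hρ hu2 (by lia) (-y2) (-y1) hR,
    dotProduct_add_resolvent_swap (isSymm_circleHankel r0 β ρ N) (isSymm_lineHankel c β ρ N)
      (one_sub_mul_eq_one_of_resolvent h_trunc)]
  have h_lt : ρ - u1 < ρ - u2 ↔ u2 < u1 := by lia
  simp only [h_lt, sub_sub_sub_cancel_left, sub_sub_cancel, neg_neg, neg_sub_neg]
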